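/- Tauberian principle in an ordered Polish space: Let X be a Polish space with a closed down-compact partial order ⪯, and let ⪯_st be the induced stochastic order on Borel probability measures (P ⪯_st P' iff P(A) ≤ P'(A) for every ⪯-increasing Borel event A). Then ⪯_st is a closed partial order on the space of Borel probability measures on X with the weak topology, and it is down-compact: for every compact family 𝒦⁺ of probability measures, the set {P : ∃ P⁺ ∈ 𝒦⁺, P ⪯_st P⁺} is compact. Consequently, the sandwich theorem holds for ⪯_st: if Pₙ⁻ ⪯_st Pₙ ⪯_st Pₙ⁺ for all n and Pₙ⁻ → P∞, Pₙ⁺ → P∞ weakly, then Pₙ → P∞ weakly. -/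

import Mathlib

open MeasureTheory Filter

/-- An event is increasing for a relation `r` if it is stable under going `r`-upwards. -/
def IsIncreasingEvent {X : Type*} (r : X → X → Prop) (A : Set X) : Prop :=
  ∀ ⦃x⦄, x ∈ A → ∀ ⦃y⦄, r x y → y ∈ A

/-- Stochastic domination of Borel probability measures induced by a relation `r`:
`P ⪯_st P'` iff `P(A) ≤ P'(A)` for every `r`-increasing Borel event `A`. -/
def StochDom {X : Type*} [TopologicalSpace X] [MeasurableSpace X]
    (r : X → X → Prop) (P P' : ProbabilityMeasure X) : Prop :=
  ∀ A : Set X, MeasurableSet A → IsIncreasingEvent r A → P A ≤ P' A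

open Topology Set

/-!
By inner regularity, `P ⪯ Q` holds iff `P U + Q V ≤ 1` for all open `U`, `V` such that no point of
`U` lies below a point of `V`: a compact part of an increasing event and a compact part of its
complement have such neighbourhoods, because the order is closed. As `P ↦ P U` is lower
semicontinuous for open `U`, the stochastic order is closed. If `P ⪯ Q ⪯ P`, then `P` and `Q` agree
on the σ-algebra generated by the increasing events, which separates disjoint compact sets, so
`P = Q` by inner regularity. The complement of the down-set of a compact set is an increasing event,
so tightness passes down the stochastic order and Prokhorov's theorem gives down-compactness.
In the sandwich theorem, the middle terms lie in the down-set of a compact set, and any cluster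
point of them is both above and below the common limit.
-/

section Topology

variable {Y Z : Type*} [TopologicalSpace Y] [TopologicalSpace Z]

lemma isClosed_setOf_exists_mem_of_isCompact {R : Set (Y × Z)} (hR : IsClosed R) {K : Set Y}
    (hK : IsCompact K) : IsClosed {z | ∃ y ∈ K, (y, z) ∈ R} := by
  have : CompactSpace K := isCompact_iff_compactSpace.1 hK
  have hRK : IsClosed {p : K × Z | ((p.1 : Y), p.2) ∈ R} := hR.preimage (by fun_prop)
  convert isClosedMap_snd_of_compactSpace _ hRK using 1
  ext z
  simp

/-- Only sequences are considered because the range of a convergent sequence, unlike that of a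
general net, is relatively compact. -/
lemma tendsto_of_sandwich {s : Y → Y → Prop}
    (hanti : ∀ a b, s a b → s b a → a = b)
    (hclosed : IsClosed {p : Y × Y | s p.1 p.2})
    (hdown : ∀ K : Set Y, IsCompact K → IsCompact {a | ∃ b ∈ K, s a b})
    {lo mid hi : ℕ → Y} {a : Y} (hlo : ∀ n, s (lo n) (mid n)) (hhi : ∀ n, s (mid n) (hi n))
    (lo_lim : Tendsto lo atTop (𝓝 a)) (hi_lim : Tendsto hi atTop (𝓝 a)) :
    Tendsto mid atTop (𝓝 a) := by
  refine (hdown _ hi_lim.isCompact_insert_range).tendsto_nhds_of_unique_mapClusterPt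
    (Eventually.of_forall fun n => ⟨hi n, mem_insert_of_mem _ (mem_range_self n), hhi n⟩) ?_
  intro b _ hb
  obtain ⟨𝒰, h𝒰, mid_lim⟩ := mapClusterPt_iff_ultrafilter.1 hb
  have hba : s b a :=
    hclosed.mem_of_tendsto (mid_lim.prodMk_nhds (hi_lim.mono_left h𝒰)) (.of_forall hhi)
  have hab : s a b :=
    hclosed.mem_of_tendsto ((lo_lim.mono_left h𝒰).prodMk_nhds mid_lim) (.of_forall hlo)
  exact hanti b a hba hab

end Topology

section Separation

variable {X : Type*} [TopologicalSpace X]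

lemma measurablySeparable_of_isCompact {m : MeasurableSpace X} {K L : Set X}
    (hK : IsCompact K) (hL : IsCompact L)
    (hsep : ∀ x ∈ K, ∀ y ∈ L, ∃ G, MeasurableSet G ∧ G ∈ 𝓝[K] x ∧ Gᶜ ∈ 𝓝[L] y) :
    MeasurablySeparable K L := by
  have hpoint (x) (hx : x ∈ K) : ∃ G, MeasurableSet G ∧ G ∈ 𝓝[K] x ∧ L ⊆ Gᶜ := by
    refine hL.induction_on (p := fun T => ∃ G, MeasurableSet G ∧ G ∈ 𝓝[K] x ∧ T ⊆ Gᶜ)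
      ⟨univ, .univ, univ_mem, empty_subset _⟩ ?_ ?_ ?_
    · rintro S T hST ⟨G, hG, hxG, hTG⟩
      exact ⟨G, hG, hxG, hST.trans hTG⟩
    · rintro S T ⟨G, hG, hxG, hSG⟩ ⟨H, hH, hxH, hTH⟩
      refine ⟨G ∩ H, hG.inter hH, inter_mem hxG hxH, ?_⟩
      rw [compl_inter]
      exact union_subset_union hSG hTH
    · intro y hy
      obtain ⟨G, hG, hxG, hyG⟩ := hsep x hx y hy
      exact ⟨Gᶜ, hyG, G, hG, hxG, Subset.rfl⟩
  refine hK.induction_on (p := fun S => MeasurablySeparable S L)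
    ⟨∅, Subset.rfl, disjoint_empty L, .empty⟩ ?_ ?_ ?_
  · rintro S T hST ⟨G, hTG, hLG, hG⟩
    exact ⟨G, hST.trans hTG, hLG, hG⟩
  · rintro S T ⟨G, hSG, hLG, hG⟩ ⟨H, hTH, hLH, hH⟩
    exact ⟨G ∪ H, union_subset_union hSG hTH, hLG.union_right hLH, hG.union hH⟩
  · intro x hx
    obtain ⟨G, hG, hxG, hLG⟩ := hpoint x hx
    exact ⟨G, hxG, G, Subset.rfl, disjoint_left.2 fun y hy hyG => hLG hy hyG, hG⟩

lemma measure_le_measure_of_forall_isCompact [T2Space X] [MeasurableSpace X]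
    [OpensMeasurableSpace X] {μ ν : Measure X} [μ.InnerRegular] [ν.InnerRegular] [IsFiniteMeasure ν]
    {A : Set X} (hA : MeasurableSet A)
    (h : ∀ K ⊆ A, IsCompact K → ∀ L ⊆ Aᶜ, IsCompact L → μ K ≤ ν Lᶜ) : μ A ≤ ν A := by
  rw [hA.measure_eq_iSup_isCompact μ]
  refine iSup₂_le fun K hKA => iSup_le fun hK => ?_
  refine le_of_forall_pos_le_add fun ε hε => ?_
  obtain ⟨L, hLA, hL, hLε⟩ :=
    hA.compl.exists_isCompact_sdiff_lt (measure_ne_top ν Aᶜ) hε.ne'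
  calc μ K ≤ ν Lᶜ := h K hKA hK L hLA hL
    _ ≤ ν (A ∪ (Aᶜ \ L)) := measure_mono fun x hx => (em (x ∈ A)).imp_right fun hxA => ⟨hxA, hx⟩
    _ ≤ ν A + ν (Aᶜ \ L) := measure_union_le _ _
    _ ≤ ν A + ε := by gcongr

lemma measure_le_of_measurablySeparable_isCompact [T2Space X] {m : MeasurableSpace X}
    [MeasurableSpace X] [OpensMeasurableSpace X] {μ ν : Measure X} [μ.InnerRegular]
    [ν.InnerRegular] [IsFiniteMeasure ν]
    (hsep : ∀ K L : Set X, IsCompact K → IsCompact L → Disjoint K L → @MeasurablySeparable X m K L)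
    (h : ∀ G, MeasurableSet[m] G → μ G ≤ ν G) : μ ≤ ν := by
  refine Measure.le_iff.2 fun A hA => measure_le_measure_of_forall_isCompact hA ?_
  intro K hKA hK L hLA hL
  obtain ⟨G, hKG, hLG, hG⟩ :=
    hsep K L hK hL (disjoint_compl_right.mono hKA hLA)
  calc μ K ≤ μ G := measure_mono hKG
    _ ≤ ν G := h G hG
    _ ≤ ν Lᶜ := measure_mono (subset_compl_iff_disjoint_left.2 hLG)

end Separation

section Order

variable {X : Type*} [TopologicalSpace X]

lemma isClosed_upperClosure_of_isCompact [Preorder X] [OrderClosedTopology X] {K : Set X}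
    (hK : IsCompact K) : IsClosed (upperClosure K : Set X) :=
  isClosed_setOf_exists_mem_of_isCompact OrderClosedTopology.isClosed_le' hK

lemma isClosed_lowerClosure_of_isCompact [Preorder X] [OrderClosedTopology X] {K : Set X}
    (hK : IsCompact K) : IsClosed (lowerClosure K : Set X) :=
  isClosed_upperClosure_of_isCompact (X := Xᵒᵈ) hK

/-- The σ-algebra generated by the increasing events. It separates disjoint compact sets, hence
determines inner regular measures, without having to be the whole Borel σ-algebra. -/
abbrev increasingMeasurableSpace (X : Type*) [Preorder X] [MeasurableSpace X] : MeasurableSpace X :=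
  .generateFrom {A | MeasurableSet A ∧ IsUpperSet A}

lemma exists_isUpperSet_mem_nhdsWithin_compl_mem_nhds [PartialOrder X] [OrderClosedTopology X]
    [MeasurableSpace X] [OpensMeasurableSpace X] {C : Set X} (hC : IsCompact C) {x y : X}
    (hxy : ¬ x ≤ y) :
    ∃ G, MeasurableSet G ∧ IsUpperSet G ∧ G ∈ 𝓝[C] x ∧ Gᶜ ∈ 𝓝 y := by
  -- `K₁` lies outside `{z | z ≤ y}` and contains all points of `C` near `x`.
  obtain ⟨K₁, K₂, hK₁, hK₂, hK₁y, hK₂x, hcover⟩ := hC.binary_compact_cover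
    (U := {z | ¬ z ≤ y}) (V := {x}ᶜ) isClosed_Iic.isOpen_compl isOpen_compl_singleton
    fun z _ => (eq_or_ne z x).imp (by rintro rfl; exact hxy) id
  have hK₁up := isClosed_upperClosure_of_isCompact hK₁
  refine ⟨upperClosure K₁, hK₁up.measurableSet, (upperClosure K₁).upper, ?_,
    hK₁up.isOpen_compl.mem_nhds ?_⟩
  · filter_upwards [self_mem_nhdsWithin,
      mem_nhdsWithin_of_mem_nhds (hK₂.isClosed.isOpen_compl.mem_nhds fun hx => hK₂x hx rfl)]
      with z hzC hzK₂
    exact subset_upperClosure ((hcover ▸ hzC).resolve_right hzK₂)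
  · rintro ⟨z, hz, hzy⟩
    exact hK₁y hz hzy

lemma measurablySeparable_increasingMeasurableSpace [PartialOrder X] [OrderClosedTopology X]
    [MeasurableSpace X] [OpensMeasurableSpace X] {K L : Set X} (hK : IsCompact K)
    (hL : IsCompact L) (hKL : Disjoint K L) :
    @MeasurablySeparable X (increasingMeasurableSpace X) K L := by
  refine measurablySeparable_of_isCompact hK hL fun x hx y hy => ?_
  rcases not_and_or.1 (mt (fun h => le_antisymm h.1 h.2) (hKL.ne_of_mem hx hy)) with hxy | hyx
  · obtain ⟨G, hG, hGup, hxG, hyG⟩ :=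
      exists_isUpperSet_mem_nhdsWithin_compl_mem_nhds hK hxy
    exact ⟨G, .basic G ⟨hG, hGup⟩, hxG, mem_nhdsWithin_of_mem_nhds hyG⟩
  · obtain ⟨G, hG, hGup, hyG, hxG⟩ :=
      exists_isUpperSet_mem_nhdsWithin_compl_mem_nhds hL hyx
    exact ⟨Gᶜ, .compl (.basic G ⟨hG, hGup⟩), mem_nhdsWithin_of_mem_nhds hxG, by rwa [compl_compl]⟩

end Order

section StochDom

local infix:50 " ⪯ₛₜ " => StochDom (· ≤ ·)

lemma isIncreasingEvent_le_iff {X : Type*} [LE X] {A : Set X} :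
    IsIncreasingEvent (· ≤ ·) A ↔ IsUpperSet A :=
  ⟨fun h _ _ hab ha => h ha hab, fun h _ ha _ hab => h hab ha⟩

variable {X : Type*} [TopologicalSpace X] [MeasurableSpace X]

lemma StochDom.refl (r : X → X → Prop) (P : ProbabilityMeasure X) : StochDom r P P :=
  fun _ _ _ => le_rfl

lemma StochDom.trans {r : X → X → Prop} {P Q R : ProbabilityMeasure X}
    (hPQ : StochDom r P Q) (hQR : StochDom r Q R) : StochDom r P R :=
  fun A hA hAr => (hPQ A hA hAr).trans (hQR A hA hAr)

lemma stochDom_le_iff [LE X] {P Q : ProbabilityMeasure X} :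
    P ⪯ₛₜ Q ↔ ∀ A : Set X, MeasurableSet A → IsUpperSet A →
      (P : Measure X) A ≤ (Q : Measure X) A := by
  simp only [StochDom, isIncreasingEvent_le_iff,
    ← ProbabilityMeasure.ennreal_coeFn_eq_coeFn_toMeasure, ENNReal.coe_le_coe]

lemma StochDom.measure_eq_of_measurableSet [Preorder X] {P Q : ProbabilityMeasure X}
    (hPQ : P ⪯ₛₜ Q) (hQP : Q ⪯ₛₜ P) {G : Set X}
    (hG : MeasurableSet[increasingMeasurableSpace X] G) :
    (P : Measure X) G = (Q : Measure X) G := by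
  have hm : increasingMeasurableSpace X ≤ ‹_› := MeasurableSpace.generateFrom_le fun A hA => hA.1
  have hpi : IsPiSystem {A : Set X | MeasurableSet A ∧ IsUpperSet A} :=
    fun A hA B hB _ => ⟨hA.1.inter hB.1, hA.2.inter hB.2⟩
  rw [← trim_measurableSet_eq hm hG, ← trim_measurableSet_eq hm hG]
  congr 1
  refine ext_of_generate_finite _ rfl hpi (fun A hA => ?_) ?_
  · simp only [trim_measurableSet_eq hm (MeasurableSpace.measurableSet_generateFrom hA)]
    exact le_antisymm (stochDom_le_iff.1 hPQ A hA.1 hA.2) (stochDom_le_iff.1 hQP A hA.1 hA.2)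
  · simp [trim_measurableSet_eq hm .univ]

lemma StochDom.antisymm [PartialOrder X] [OrderClosedTopology X] [OpensMeasurableSpace X]
    {P Q : ProbabilityMeasure X} [(P : Measure X).InnerRegular] [(Q : Measure X).InnerRegular]
    (hPQ : P ⪯ₛₜ Q) (hQP : Q ⪯ₛₜ P) : P = Q := by
  have hsep := fun K L : Set X => measurablySeparable_increasingMeasurableSpace (K := K) (L := L)
  refine ProbabilityMeasure.toMeasure_injective (le_antisymm ?_ ?_)
  · exact measure_le_of_measurablySeparable_isCompact hsep
      fun _ hG => (hPQ.measure_eq_of_measurableSet hQP hG).le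
  · exact measure_le_of_measurablySeparable_isCompact hsep
      fun _ hG => (hQP.measure_eq_of_measurableSet hPQ hG).le

lemma stochDom_le_iff_forall_isOpen [T2Space X] [Preorder X] [OrderClosedTopology X]
    [OpensMeasurableSpace X] {P Q : ProbabilityMeasure X}
    [(P : Measure X).InnerRegular] [(Q : Measure X).InnerRegular] :
    P ⪯ₛₜ Q ↔ ∀ U V : Set X, IsOpen U → IsOpen V → (∀ u ∈ U, ∀ v ∈ V, ¬ u ≤ v) →
      (P : Measure X) U + (Q : Measure X) V ≤ 1 := by
  have hcompl {U V : Set X} (hV : IsOpen V) : (P : Measure X) U + (Q : Measure X) V ≤ 1 ↔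
      (P : Measure X) U ≤ (Q : Measure X) Vᶜ := by
    rw [prob_compl_eq_one_sub hV.measurableSet,
      ENNReal.le_sub_iff_add_le_right (measure_ne_top _ _) prob_le_one]
  constructor
  · intro hPQ U V hU hV hUV
    rw [hcompl hV, hU.measurableSet.measure_eq_iSup_isCompact]
    refine iSup₂_le fun K hKU => iSup_le fun hK => ?_
    have hKup := (isClosed_upperClosure_of_isCompact hK).measurableSet
    calc (P : Measure X) K ≤ (P : Measure X) (upperClosure K) := measure_mono subset_upperClosure
      _ ≤ (Q : Measure X) (upperClosure K) :=
        stochDom_le_iff.1 hPQ _ hKup (upperClosure K).upper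
      _ ≤ (Q : Measure X) Vᶜ := measure_mono <| by
        rintro v ⟨u, hu, huv⟩ hv
        exact hUV u (hKU hu) v hv huv
  · intro h
    refine stochDom_le_iff.2 fun A hA hAup => measure_le_measure_of_forall_isCompact hA ?_
    intro K hKA hK L hLA hL
    have hKL : K ×ˢ L ⊆ {p : X × X | p.1 ≤ p.2}ᶜ :=
      fun p hp hle => hLA hp.2 (hAup hle (hKA hp.1))
    obtain ⟨U, V, hU, hV, hKU, hLV, hUV⟩ :=
      generalized_tube_lemma hK hL OrderClosedTopology.isClosed_le'.isOpen_compl hKL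
    calc (P : Measure X) K ≤ (P : Measure X) U := measure_mono hKU
      _ ≤ (Q : Measure X) Vᶜ := (hcompl hV).1 <|
        h U V hU hV fun u hu v hv => hUV (mk_mem_prod hu hv)
      _ ≤ (Q : Measure X) Lᶜ := measure_mono (compl_subset_compl.2 hLV)

lemma lowerSemicontinuous_measure_isOpen [OpensMeasurableSpace X] [HasOuterApproxClosed X]
    {U : Set X} (hU : IsOpen U) :
    LowerSemicontinuous fun P : ProbabilityMeasure X => (P : Measure X) U :=
  lowerSemicontinuous_iff_le_liminf.2 fun _ =>
    ProbabilityMeasure.le_liminf_measure_open_of_tendsto tendsto_id hU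

lemma isClosed_setOf_stochDom_le [Preorder X] [OrderClosedTopology X] [PolishSpace X]
    [BorelSpace X] : IsClosed {p : ProbabilityMeasure X × ProbabilityMeasure X | p.1 ⪯ₛₜ p.2} := by
  simp only [stochDom_le_iff_forall_isOpen, ofPred_forall]
  refine isClosed_iInter fun U => isClosed_iInter fun V => isClosed_iInter fun hU =>
    isClosed_iInter fun hV => isClosed_iInter fun _ => ?_
  exact ((lowerSemicontinuous_measure_isOpen hU).comp continuous_fst).add
    ((lowerSemicontinuous_measure_isOpen hV).comp continuous_snd) |>.isClosed_preimage 1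

lemma isTightMeasureSet_setOf_stochDom_le [Preorder X] [OrderClosedTopology X]
    [OpensMeasurableSpace X]
    (hdown : ∀ K : Set X, IsCompact K → IsCompact (lowerClosure K : Set X))
    {𝒦 : Set (ProbabilityMeasure X)}
    (h𝒦 : IsTightMeasureSet {((Q : ProbabilityMeasure X) : Measure X) | Q ∈ 𝒦}) :
    IsTightMeasureSet {((P : ProbabilityMeasure X) : Measure X) | P ∈ {P | ∃ Q ∈ 𝒦, P ⪯ₛₜ Q}} := by
  rw [isTightMeasureSet_iff_exists_isCompact_measure_compl_le] at h𝒦 ⊢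
  intro ε hε
  obtain ⟨K, hK, hKε⟩ := h𝒦 ε hε
  refine ⟨lowerClosure K, hdown K hK, ?_⟩
  rintro _ ⟨P, ⟨Q, hQ, hPQ⟩, rfl⟩
  calc (P : Measure X) (lowerClosure K : Set X)ᶜ ≤ (Q : Measure X) (lowerClosure K : Set X)ᶜ :=
        stochDom_le_iff.1 hPQ _ (isClosed_lowerClosure_of_isCompact hK).measurableSet.compl
          (lowerClosure K).lower.compl
    _ ≤ (Q : Measure X) Kᶜ := measure_mono (compl_subset_compl.2 subset_lowerClosure)
    _ ≤ ε := hKε _ ⟨Q, hQ, rfl⟩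

lemma isCompact_setOf_stochDom_le [Preorder X] [OrderClosedTopology X] [PolishSpace X]
    [BorelSpace X] (hdown : ∀ K : Set X, IsCompact K → IsCompact (lowerClosure K : Set X))
    {𝒦 : Set (ProbabilityMeasure X)} (h𝒦 : IsCompact 𝒦) :
    IsCompact {P : ProbabilityMeasure X | ∃ Q ∈ 𝒦, P ⪯ₛₜ Q} := by
  let _ := TopologicalSpace.upgradeIsCompletelyMetrizable X
  have h𝒦tight := isTightMeasureSet_of_isCompact_closure h𝒦.closure
  have hclosed : IsClosed {P : ProbabilityMeasure X | ∃ Q ∈ 𝒦, P ⪯ₛₜ Q} :=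
    isClosed_setOf_exists_mem_of_isCompact
      (isClosed_setOf_stochDom_le.preimage continuous_swap) h𝒦
  rw [← hclosed.closure_eq]
  exact isCompact_closure_of_isTightMeasureSet
    (isTightMeasureSet_setOf_stochDom_le hdown h𝒦tight)

end StochDom

/-- Tauberian principle in an ordered Polish space: if `⪯` is a closed, down-compact
partial order on a Polish space `X`, then the induced stochastic order `⪯_st` on
Borel probability measures is a closed, down-compact partial order for the topology
of weak convergence, and the sandwich theorem holds for `⪯_st`. -/
theorem stmt_19 {X : Type*} [MetricSpace X] [CompleteSpace X]
    [SecondCountableTopology X] [MeasurableSpace X] [BorelSpace X]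
    (r : X → X → Prop)
    (hrefl : ∀ x, r x x) (hanti : ∀ x y, r x y → r y x → x = y)
    (htrans : ∀ x y z, r x y → r y z → r x z)
    (hclosed : IsClosed {p : X × X | r p.1 p.2})
    (hdc : ∀ K : Set X, IsCompact K → IsCompact {x | ∃ y ∈ K, r x y}) :
    (∀ P : ProbabilityMeasure X, StochDom r P P) ∧
    (∀ P Q : ProbabilityMeasure X, StochDom r P Q → StochDom r Q P → P = Q) ∧
    (∀ P Q R : ProbabilityMeasure X,
      StochDom r P Q → StochDom r Q R → StochDom r P R) ∧
    IsClosed {p : ProbabilityMeasure X × ProbabilityMeasure X | StochDom r p.1 p.2} ∧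
    (∀ 𝒦 : Set (ProbabilityMeasure X), IsCompact 𝒦 →
      IsCompact {P : ProbabilityMeasure X | ∃ Q ∈ 𝒦, StochDom r P Q}) ∧
    (∀ (Pm P Pp : ℕ → ProbabilityMeasure X) (Pinf : ProbabilityMeasure X),
      (∀ n, StochDom r (Pm n) (P n)) → (∀ n, StochDom r (P n) (Pp n)) →
      Tendsto Pm atTop (nhds Pinf) → Tendsto Pp atTop (nhds Pinf) →
      Tendsto P atTop (nhds Pinf)) := by
  let _ : PartialOrder X :=
    { le := r, le_refl := hrefl, le_trans := htrans, le_antisymm := hanti }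
  have _ : OrderClosedTopology X := ⟨hclosed⟩
  have hanti_st (P Q : ProbabilityMeasure X) : StochDom r P Q → StochDom r Q P → P = Q :=
    StochDom.antisymm
  have hclosed_st := isClosed_setOf_stochDom_le (X := X)
  have hdown_st (𝒦 : Set (ProbabilityMeasure X)) (h𝒦 : IsCompact 𝒦) :=
    isCompact_setOf_stochDom_le hdc h𝒦
  exact ⟨StochDom.refl r, hanti_st, fun _ _ _ => StochDom.trans, hclosed_st, hdown_st,
    fun _ _ _ _ hlo hhi => tendsto_of_sandwich hanti_st hclosed_st hdown_st hlo hhi⟩
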